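/- arXiv:2502.17809 — 2 statements merged into one kernel-verified Lean document; each statement's English description precedes it below -/
import Mathlib

section
/- Fix ε ∈ (0,1), m = 2 products, and the value distribution with f(1, 0) = 1 − ε and f(1/ε, 2/ε) = ε. Then the optimal welfare equals E[max(v1,v2)] = 3 − ε, while every IC-IR mechanism with finite signal space has revenue at most 2 + 2ε. Consequently, for any ε' > 0 there is an instance with two products in which the optimal revenue is at most (2/3 + ε') times the optimal welfare. -/
open Finset

noncomputable section

namespace Screening

variable {m : ℕ} {ι : Type}

/-- The ex-ante probability of signal `s` under information structure `σ`. -/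
def sigR (V : Finset (Fin m → ℝ)) (f : (Fin m → ℝ) → ℝ)
    (σ : (Fin m → ℝ) → ι → ℝ) (s : ι) : ℝ :=
  ∑ v ∈ V, f v * σ v s

/-- The posterior mean value of product `i` upon receiving signal `s`. -/
def post (V : Finset (Fin m → ℝ)) (f : (Fin m → ℝ) → ℝ)
    (σ : (Fin m → ℝ) → ι → ℝ) (s : ι) (i : Fin m) : ℝ :=
  (∑ v ∈ V, f v * σ v s * v i) / sigR V f σ s

/-- `σ` is an information structure with finite signal space `S`. -/
def IsInfo (V : Finset (Fin m → ℝ)) (S : Finset ι)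
    (σ : (Fin m → ℝ) → ι → ℝ) : Prop :=
  ∀ v ∈ V, (∀ s, 0 ≤ σ v s) ∧ (∀ s, s ∉ S → σ v s = 0) ∧ (∑ s ∈ S, σ v s = 1)

/-- `x` is a feasible (random, unit-demand) allocation rule on `S`. -/
def IsAlloc (S : Finset ι) (x : ι → Fin m → ℝ) : Prop :=
  ∀ s ∈ S, (∀ i, 0 ≤ x s i) ∧ (∀ i, x s i ≤ 1) ∧ (∑ i, x s i ≤ 1)

/-- Incentive compatibility. -/
def IC (V : Finset (Fin m → ℝ)) (f : (Fin m → ℝ) → ℝ) (S : Finset ι)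
    (σ : (Fin m → ℝ) → ι → ℝ) (x : ι → Fin m → ℝ) (p : ι → ℝ) : Prop :=
  ∀ s ∈ S, 0 < sigR V f σ s → ∀ s' ∈ S,
    (∑ i, post V f σ s i * x s' i) - p s' ≤ (∑ i, post V f σ s i * x s i) - p s

/-- Individual rationality. -/
def IR (V : Finset (Fin m → ℝ)) (f : (Fin m → ℝ) → ℝ) (S : Finset ι)
    (σ : (Fin m → ℝ) → ι → ℝ) (x : ι → Fin m → ℝ) (p : ι → ℝ) : Prop :=
  ∀ s ∈ S, 0 < sigR V f σ s → 0 ≤ (∑ i, post V f σ s i * x s i) - p s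

/-- Expected revenue of a mechanism. -/
def Rev (V : Finset (Fin m → ℝ)) (f : (Fin m → ℝ) → ℝ) (S : Finset ι)
    (σ : (Fin m → ℝ) → ι → ℝ) (p : ι → ℝ) : ℝ :=
  ∑ s ∈ S, sigR V f σ s * p s

/-- Nonemptiness of `Fin m` as a finset, given `0 < m`. -/
lemma univNe (hm : 0 < m) : (univ : Finset (Fin m)).Nonempty :=
  univ_nonempty_iff.mpr (Fin.pos_iff_nonempty.mp hm)

/-- The maximum value `max_i v_i`. -/
def vmax (hm : 0 < m) (v : Fin m → ℝ) : ℝ :=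
  univ.sup' (univNe hm) v

/-- The smallest-index maximizing coordinate of `v`. -/
def istar (hm : 0 < m) (v : Fin m → ℝ) : Fin m :=
  (univ.filter (fun i => ∀ j, v j ≤ v i)).min' (by
    obtain ⟨i, -, hi⟩ := Finset.exists_max_image (univ : Finset (Fin m)) v (univNe hm)
    exact ⟨i, mem_filter.mpr ⟨mem_univ _, fun j => hi j (mem_univ _)⟩⟩)

/-- The probability that product `i` is the (selected) highest-value product. -/
def probTop (V : Finset (Fin m → ℝ)) (f : (Fin m → ℝ) → ℝ)
    (top : (Fin m → ℝ) → Fin m) (i : Fin m) : ℝ :=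
  ∑ v ∈ V.filter (fun v => top v = i), f v

/-- The posterior mean value of product `j` conditional on `i` being the highest-value
product (i.e. conditional on the horizontal-disclosure signal `i`). -/
def condMean (V : Finset (Fin m → ℝ)) (f : (Fin m → ℝ) → ℝ)
    (top : (Fin m → ℝ) → Fin m) (i j : Fin m) : ℝ :=
  (∑ v ∈ V.filter (fun v => top v = i), f v * v j) / probTop V f top i


/-- The frequent type `(1, 0)`. -/
def wLow : Fin 2 → ℝ := ![1, 0]

/-- The rare type `(1/ε, 2/ε)`. -/
def wHigh (ε : ℝ) : Fin 2 → ℝ := ![ε⁻¹, 2 * ε⁻¹]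

/-- The hardness distribution: `f(1,0) = 1 − ε`, `f(1/ε, 2/ε) = ε`. -/
def fHard (ε : ℝ) : (Fin 2 → ℝ) → ℝ :=
  fun v => if v = wLow then 1 - ε else if v = wHigh ε then ε else 0

/-!
Both values lie on the line `v 0 = 1 + (1 - ε) * t`, `v 1 = 2 * t`, hence so does every posterior
mean, and the prior mean is the point `t = 1`. An allocation `x` is therefore worth `x 0 + t * g`
with slope `g = (1 - ε) * x 0 + 2 * x 1`: screening is one-dimensional. Let `k` be the slope of a
menu entry (or the null outcome) that is best for `t = 1`, that is, a subgradient of the indirect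
utility there. Feasibility bounds the intercept `x 0` by both `g + ε` and `2 - g`, and with
incentive compatibility this bounds the price paid at `t` by the affine function
`2 + ε + (2 - k) * (t - 1)`. As `t` has mean `1`, the expected price is at most `2 + ε`.
-/

section InformationStructure

variable {V : Finset (Fin m → ℝ)} {f : (Fin m → ℝ) → ℝ} {S : Finset ι}
  {σ : (Fin m → ℝ) → ι → ℝ} {x : ι → Fin m → ℝ} {p : ι → ℝ} {s : ι}

lemma sigR_nonneg (hf : ∀ v ∈ V, 0 ≤ f v) (hσ : IsInfo V S σ) (s : ι) : 0 ≤ sigR V f σ s :=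
  sum_nonneg fun v hv => mul_nonneg (hf v hv) ((hσ v hv).1 s)

lemma post_nonneg (hV : ∀ v ∈ V, ∀ i, 0 ≤ v i) (hf : ∀ v ∈ V, 0 ≤ f v) (hσ : IsInfo V S σ)
    (s : ι) (i : Fin m) : 0 ≤ post V f σ s i :=
  div_nonneg
    (sum_nonneg fun v hv => mul_nonneg (mul_nonneg (hf v hv) ((hσ v hv).1 s)) (hV v hv i))
    (sigR_nonneg hf hσ s)

lemma sigR_mul_affine_post (hs : sigR V f σ s ≠ 0) (c : ℝ) (d : Fin m → ℝ) :
    sigR V f σ s * (c + ∑ i, post V f σ s i * d i) =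
      ∑ v ∈ V, f v * σ v s * (c + ∑ i, v i * d i) := by
  have sigR_mul_post (i : Fin m) :
      sigR V f σ s * post V f σ s i = ∑ v ∈ V, f v * σ v s * v i :=
    mul_div_cancel₀ _ hs
  calc sigR V f σ s * (c + ∑ i, post V f σ s i * d i)
      = sigR V f σ s * c + ∑ i, (∑ v ∈ V, f v * σ v s * v i) * d i := by
        simp only [mul_add, mul_sum, ← mul_assoc, sigR_mul_post]
    _ = ∑ v ∈ V, f v * σ v s * (c + ∑ i, v i * d i) := by
        simp only [sigR, mul_add, sum_add_distrib, sum_mul, mul_sum, mul_assoc]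
        rw [sum_comm]

lemma sum_post_mul_eq_of_forall {b : ℝ} {d : Fin m → ℝ} (hd : ∀ v ∈ V, ∑ i, v i * d i = b)
    (hs : sigR V f σ s ≠ 0) : ∑ i, post V f σ s i * d i = b := by
  have scaled : sigR V f σ s * (-b + ∑ i, post V f σ s i * d i) = 0 := by
    rw [sigR_mul_affine_post hs]
    exact sum_eq_zero fun v hv => by rw [hd v hv, neg_add_cancel, mul_zero]
  linarith [(mul_eq_zero.mp scaled).resolve_left hs]

lemma sigR_mul_price_le (hf : ∀ v ∈ V, 0 ≤ f v) (hσ : IsInfo V S σ) {c : ℝ} {d : Fin m → ℝ}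
    (hp : 0 < sigR V f σ s → p s ≤ c + ∑ i, post V f σ s i * d i) :
    sigR V f σ s * p s ≤ ∑ v ∈ V, f v * σ v s * (c + ∑ i, v i * d i) := by
  rcases (sigR_nonneg hf hσ s).eq_or_lt with hs | hs
  · have joint_eq_zero : ∀ v ∈ V, f v * σ v s = 0 :=
      (sum_eq_zero_iff_of_nonneg fun v hv => mul_nonneg (hf v hv) ((hσ v hv).1 s)).mp hs.symm
    rw [← hs, zero_mul, sum_eq_zero fun v hv => by rw [joint_eq_zero v hv, zero_mul]]
  · rw [← sigR_mul_affine_post hs.ne']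
    exact mul_le_mul_of_nonneg_left (hp hs) hs.le

lemma rev_le_of_price_le_affine_post (hf : ∀ v ∈ V, 0 ≤ f v) (hσ : IsInfo V S σ)
    (c : ℝ) (d : Fin m → ℝ)
    (hp : ∀ s ∈ S, 0 < sigR V f σ s → p s ≤ c + ∑ i, post V f σ s i * d i) :
    Rev V f S σ p ≤ ∑ v ∈ V, f v * (c + ∑ i, v i * d i) :=
  calc Rev V f S σ p
      ≤ ∑ s ∈ S, ∑ v ∈ V, f v * σ v s * (c + ∑ i, v i * d i) :=
        sum_le_sum fun s hs => sigR_mul_price_le hf hσ (hp s hs)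
    _ = ∑ v ∈ V, f v * (c + ∑ i, v i * d i) := by
        rw [sum_comm]
        refine sum_congr rfl fun v hv => ?_
        rw [← sum_mul, ← mul_sum, (hσ v hv).2.2, mul_one]

-- Take an outcome that is best for `w` among the menu entries and the null outcome `(0, 0)`.
lemma exists_outcome_supporting_utility (hIC : IC V f S σ x p) (hIR : IR V f S σ x p)
    (w : Fin m → ℝ) :
    ∃ (y : Fin m → ℝ) (c : ℝ), 0 ≤ (∑ i, w i * y i) - c ∧
      (∀ s ∈ S, (∑ i, w i * x s i) - p s ≤ (∑ i, w i * y i) - c) ∧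
      ∀ s ∈ S, 0 < sigR V f σ s →
        (∑ i, post V f σ s i * y i) - c ≤ (∑ i, post V f σ s i * x s i) - p s := by
  let outcomes : Finset ((Fin m → ℝ) × ℝ) := insert (0, 0) (S.image fun s => (x s, p s))
  obtain ⟨⟨y, c⟩, hmem, hbest⟩ := exists_max_image outcomes
    (fun o => (∑ i, w i * o.1 i) - o.2) (insert_nonempty _ _)
  refine ⟨y, c, ?_, fun s hs => ?_, fun s hs hr => ?_⟩
  · simpa using hbest (0, 0) (mem_insert_self _ _)
  · exact hbest (x s, p s) (mem_insert_of_mem (mem_image_of_mem _ hs))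
  · rcases mem_insert.mp hmem with hnull | hentry
    · obtain ⟨rfl, rfl⟩ := Prod.mk.inj hnull
      simpa using hIR s hs hr
    · obtain ⟨s', hs', heq⟩ := mem_image.mp hentry
      obtain ⟨rfl, rfl⟩ := Prod.mk.inj heq
      exact hIC s hs hr s' hs'

end InformationStructure

section OneDimensionalScreening

-- An outcome worth `b + t * g` is sold to type `t` at price `p`, and the line `a + t * k` supports
-- the indirect utility at `t = 1`.
variable {ε t b g p a k : ℝ}

lemma slope_le_of_lt_one (ht : t < 1) (hIC : a + t * k ≤ b + t * g - p)
    (hbest : b + g - p ≤ a + k) : g ≤ k := by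
  have crossing : (1 - t) * g ≤ (1 - t) * k := by linarith
  exact le_of_mul_le_mul_left crossing (sub_pos.mpr ht)

lemma price_le_of_one_le (ht : 1 ≤ t) (hg : g ≤ 2) (hbg : b ≤ 2 - g) (hak : 0 ≤ a + k)
    (hIC : a + t * k ≤ b + t * g - p) : p ≤ 2 + (2 - k) * (t - 1) :=
  calc p ≤ b + t * g - (a + t * k) := by linarith
    _ ≤ 2 + g * (t - 1) - k * (t - 1) := by linarith
    _ ≤ 2 + 2 * (t - 1) - k * (t - 1) := by gcongr
    _ = 2 + (2 - k) * (t - 1) := by ring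

lemma price_le_of_le_one (hε : 0 ≤ ε) (ht₀ : 0 ≤ t) (ht₁ : t ≤ 1) (hgk : g ≤ k)
    (hbε : b ≤ g + ε) (hbg : b ≤ 2 - g) (hIR : p ≤ b + t * g) :
    p ≤ 2 + ε + (2 - k) * (t - 1) := by
  rcases le_total g 1 with hg | hg
  · calc p ≤ ε + 2 * (t * g) + g * (1 - t) := by linarith
      _ ≤ ε + 2 * (t * 1) + k * (1 - t) := by gcongr
      _ = 2 + ε + (2 - k) * (t - 1) := by ring
  · have hkg : 2 - k ≤ g := by linarith
    calc p ≤ 2 + ε - g * (1 - t) := by linarith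
      _ ≤ 2 + ε - (2 - k) * (1 - t) := by gcongr
      _ = 2 + ε + (2 - k) * (t - 1) := by ring

lemma price_le_affine (hε : 0 ≤ ε) (ht : 0 ≤ t) (hg : g ≤ 2) (hbε : b ≤ g + ε)
    (hbg : b ≤ 2 - g) (hak : 0 ≤ a + k) (hbest : b + g - p ≤ a + k)
    (hIC : a + t * k ≤ b + t * g - p) (hIR : p ≤ b + t * g) :
    p ≤ 2 + ε + (2 - k) * (t - 1) := by
  rcases le_or_gt 1 t with h | h
  · linarith [price_le_of_one_le h hg hbg hak hIC]
  · exact price_le_of_le_one hε ht h.le (slope_le_of_lt_one h hIC hbest) hbε hbg hIR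

end OneDimensionalScreening

section HardInstance

variable {ε : ℝ}

lemma wLow_ne_wHigh (hε : ε ≠ 0) : wLow ≠ wHigh ε := fun h => by
  simpa [wLow, wHigh, hε] using congrFun h 1

lemma fHard_wLow : fHard ε wLow = 1 - ε := if_pos rfl

lemma fHard_wHigh (hε : ε ≠ 0) : fHard ε (wHigh ε) = ε := by
  simp [fHard, (wLow_ne_wHigh hε).symm]

lemma fHard_eq_zero {v : Fin 2 → ℝ} (hv : v ∉ ({wLow, wHigh ε} : Finset _)) :
    fHard ε v = 0 := by
  simp only [mem_insert, mem_singleton, not_or] at hv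
  simp [fHard, hv]

lemma sum_fHard_mul (hε : ε ≠ 0) (F : (Fin 2 → ℝ) → ℝ) :
    ∑ v ∈ {wLow, wHigh ε}, fHard ε v * F v = (1 - ε) * F wLow + ε * F (wHigh ε) := by
  rw [sum_pair (wLow_ne_wHigh hε), fHard_wLow, fHard_wHigh hε]

lemma sum_fHard (hε : ε ≠ 0) : ∑ v ∈ {wLow, wHigh ε}, fHard ε v = 1 := by
  simpa using sum_fHard_mul hε fun _ => 1

lemma fHard_pos (hε₀ : 0 < ε) (hε₁ : ε < 1) :
    ∀ v ∈ ({wLow, wHigh ε} : Finset _), 0 < fHard ε v := by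
  simp [fHard_wLow, fHard_wHigh hε₀.ne', hε₀, hε₁]

lemma hard_value_nonneg (hε : 0 ≤ ε) : ∀ v ∈ ({wLow, wHigh ε} : Finset _), ∀ i, 0 ≤ v i := by
  simp [wLow, wHigh, hε]

lemma welfare_fHard (hε : 0 < ε) :
    ∑ v ∈ {wLow, wHigh ε}, fHard ε v * max (v 0) (v 1) = 3 - ε := by
  have max_wLow : max (wLow 0) (wLow 1) = 1 := by simp [wLow]
  have max_wHigh : max (wHigh ε 0) (wHigh ε 1) = 2 * ε⁻¹ :=
    max_eq_right (le_mul_of_one_le_left (inv_nonneg.mpr hε.le) one_le_two)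
  rw [sum_fHard_mul hε.ne' fun v => max (v 0) (v 1), max_wLow, max_wHigh]
  field_simp
  ring

lemma post_zero_eq_one_add_mul_post_one (hε : ε ≠ 0) {f : (Fin 2 → ℝ) → ℝ}
    {σ : (Fin 2 → ℝ) → ι → ℝ} {s : ι} (hs : sigR {wLow, wHigh ε} f σ s ≠ 0) :
    post {wLow, wHigh ε} f σ s 0 = 1 + (1 - ε) * (post {wLow, wHigh ε} f σ s 1 / 2) := by
  have hline : ∀ v ∈ ({wLow, wHigh ε} : Finset _), ∑ i, v i * ![1, -(1 - ε) / 2] i = 1 := by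
    simp only [wLow, wHigh, mem_insert, mem_singleton, Fin.sum_univ_two, Matrix.cons_val_zero,
      Matrix.cons_val_one, forall_eq_or_imp, forall_eq, mul_one, zero_mul, add_zero, true_and]
    field_simp
    ring
  have hpost := sum_post_mul_eq_of_forall hline hs
  simp only [Fin.sum_univ_two, Matrix.cons_val_zero, Matrix.cons_val_one] at hpost
  linarith

lemma price_le_of_value_on_line (hε : 0 ≤ ε) {t p c : ℝ} (ht : 0 ≤ t) {ν x y : Fin 2 → ℝ}
    (hν₀ : ν 0 = 1 + (1 - ε) * t) (hν₁ : ν 1 = 2 * t)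
    (hx : ∀ i, 0 ≤ x i) (hx₁ : ∑ i, x i ≤ 1)
    (hy : 0 ≤ (∑ i, ![2 - ε, 2] i * y i) - c)
    (hbest : (∑ i, ![2 - ε, 2] i * x i) - p ≤ (∑ i, ![2 - ε, 2] i * y i) - c)
    (hIC : (∑ i, ν i * y i) - c ≤ (∑ i, ν i * x i) - p) (hIR : 0 ≤ (∑ i, ν i * x i) - p) :
    p ≤ 2 + ε + (2 - ((1 - ε) * y 0 + 2 * y 1)) * (t - 1) := by
  simp only [Fin.sum_univ_two, Matrix.cons_val_zero, Matrix.cons_val_one, hν₀, hν₁]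
    at hx₁ hy hbest hIC hIR
  have hεx : 0 ≤ ε * x 0 := mul_nonneg hε (hx 0)
  have hεx₁ : ε * x 0 ≤ ε := mul_le_of_le_one_right hε (by linarith [hx 1])
  have slope_le : (1 - ε) * x 0 + 2 * x 1 ≤ 2 := by linarith [hx 0]
  have intercept_le_slope_add : x 0 ≤ (1 - ε) * x 0 + 2 * x 1 + ε := by linarith [hx 1]
  have intercept_le_sub_slope : x 0 ≤ 2 - ((1 - ε) * x 0 + 2 * x 1) := by linarith
  exact price_le_affine (a := y 0 - c) hε ht slope_le intercept_le_slope_add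
    intercept_le_sub_slope (by linarith) (by linarith) (by linarith) (by linarith)

lemma rev_fHard_le_two_add (hε₀ : 0 < ε) (hε₁ : ε < 1) {S : Finset ι} {σ : (Fin 2 → ℝ) → ι → ℝ}
    {x : ι → Fin 2 → ℝ} {p : ι → ℝ} (hσ : IsInfo {wLow, wHigh ε} S σ) (hx : IsAlloc S x)
    (hIC : IC {wLow, wHigh ε} (fHard ε) S σ x p) (hIR : IR {wLow, wHigh ε} (fHard ε) S σ x p) :
    Rev {wLow, wHigh ε} (fHard ε) S σ p ≤ 2 + ε := by
  have hf : ∀ v ∈ ({wLow, wHigh ε} : Finset _), 0 ≤ fHard ε v :=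
    fun v hv => (fHard_pos hε₀ hε₁ v hv).le
  -- `![2 - ε, 2]` is the prior mean.
  obtain ⟨y, c, hy, hbest, hsupp⟩ := exists_outcome_supporting_utility hIC hIR ![2 - ε, 2]
  set β := 2 - ((1 - ε) * y 0 + 2 * y 1)
  have price_le : ∀ s ∈ S, 0 < sigR {wLow, wHigh ε} (fHard ε) σ s →
      p s ≤ (2 + ε - β) + ∑ i, post {wLow, wHigh ε} (fHard ε) σ s i * ![0, β / 2] i := by
    intro s hs hr
    have hpost := post_nonneg (hard_value_nonneg hε₀.le) hf hσ s 1
    have hp := price_le_of_value_on_line hε₀.le (by positivity)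
      (post_zero_eq_one_add_mul_post_one hε₀.ne' hr.ne') (mul_div_cancel₀ _ two_ne_zero).symm
      (hx s hs).1 (hx s hs).2.2 hy (hbest s hs) (hsupp s hs hr) (hIR s hs hr)
    simp only [Fin.sum_univ_two, Matrix.cons_val_zero, Matrix.cons_val_one]
    linarith
  calc Rev {wLow, wHigh ε} (fHard ε) S σ p
      ≤ ∑ v ∈ {wLow, wHigh ε}, fHard ε v * ((2 + ε - β) + ∑ i, v i * ![0, β / 2] i) :=
        rev_le_of_price_le_affine_post hf hσ _ _ price_le
    _ = 2 + ε := by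
        rw [sum_fHard_mul hε₀.ne' fun v => (2 + ε - β) + ∑ i, v i * ![0, β / 2] i]
        simp only [wLow, wHigh, Fin.sum_univ_two, Matrix.cons_val_zero, Matrix.cons_val_one]
        field_simp
        ring

end HardInstance

/-- on the instance `f(1,0) = 1 − ε`, `f(1/ε,2/ε) = ε`, the optimal welfare
is `3 − ε` while no IC-IR mechanism earns more than `2 + 2ε`; consequently, for every
`ε' > 0` there is a two-product instance where the optimal revenue is at most
`(2/3 + ε')` times the optimal welfare. -/
theorem two_product_hardness (ε : ℝ) (hε0 : 0 < ε) (hε1 : ε < 1) :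
    -- the optimal welfare E[max(v1, v2)] equals 3 − ε
    (∑ v ∈ ({wLow, wHigh ε} : Finset (Fin 2 → ℝ)), fHard ε v * max (v 0) (v 1) = 3 - ε) ∧
    -- every IC-IR mechanism with a finite signal space has revenue at most 2 + 2ε
    (∀ (ι : Type) (S : Finset ι) (σ : (Fin 2 → ℝ) → ι → ℝ)
        (x : ι → Fin 2 → ℝ) (q : ι → ℝ),
        IsInfo {wLow, wHigh ε} S σ → IsAlloc S x →
        IC {wLow, wHigh ε} (fHard ε) S σ x q → IR {wLow, wHigh ε} (fHard ε) S σ x q →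
        Rev {wLow, wHigh ε} (fHard ε) S σ q ≤ 2 + 2 * ε) ∧
    -- consequently, for every ε' > 0 there is a two-product instance on which every
    -- IC-IR mechanism earns at most (2/3 + ε') times the optimal welfare
    (∀ ε' : ℝ, 0 < ε' →
      ∃ (V : Finset (Fin 2 → ℝ)) (f : (Fin 2 → ℝ) → ℝ),
        V.Nonempty ∧ (∀ v ∈ V, 0 < f v) ∧ (∀ v, v ∉ V → f v = 0) ∧
        (∑ v ∈ V, f v = 1) ∧ (∀ v ∈ V, ∀ i, 0 ≤ v i) ∧
        (∀ (ι : Type) (S : Finset ι) (σ : (Fin 2 → ℝ) → ι → ℝ)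
            (x : ι → Fin 2 → ℝ) (q : ι → ℝ),
            IsInfo V S σ → IsAlloc S x → IC V f S σ x q → IR V f S σ x q →
            Rev V f S σ q ≤ (2 / 3 + ε') * ∑ v ∈ V, f v * max (v 0) (v 1))) := by
  refine ⟨welfare_fHard hε0, fun ι S σ x q hσ hx hIC hIR => ?_, fun ε' hε' => ?_⟩
  · linarith [rev_fHard_le_two_add hε0 hε1 hσ hx hIC hIR]
  · obtain ⟨δ, hδ₀, hδ⟩ := exists_between (lt_min one_half_pos hε')
    obtain ⟨hδ₁, hδε'⟩ := lt_min_iff.mp hδ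
    have hδ_lt_one : δ < 1 := hδ₁.trans one_half_lt_one
    refine ⟨{wLow, wHigh δ}, fHard δ, insert_nonempty _ _, fHard_pos hδ₀ hδ_lt_one,
      fun v => fHard_eq_zero, sum_fHard hδ₀.ne', hard_value_nonneg hδ₀.le,
      fun ι S σ x q hσ hx hIC hIR => ?_⟩
    rw [welfare_fHard hδ₀]
    calc Rev {wLow, wHigh δ} (fHard δ) S σ q
        ≤ 2 + δ := rev_fHard_le_two_add hδ₀ hδ_lt_one hσ hx hIC hIR
      _ ≤ (2 / 3 + ε') * (3 - δ) := by nlinarith [mul_pos hε' (sub_pos.mpr hδ₁)]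

end Screening
end
end

section
/- Let f be an exchangeable value distribution on ℝ_{≥0}^m with finite support on which every v has a unique maximizing coordinate i*(v). Define prices p_i := E[v_i | i*(v)=i] for every i with P(i*(v)=i) > 0. Then for every i with P(i*(v)=i) > 0 and every i' with P(i*(v)=i') > 0, E[v_{i'} | i*(v)=i] − p_{i'} ≤ 0 = E[v_i | i*(v)=i] − p_i (so under horizontal disclosure the buyer receiving signal i optimally purchases product i), and Σ_{i : P(i*(v)=i) > 0} P(i*(v)=i)·p_i = E[max_j v_j]. That is, under exchangeability a pricing mechanism with horizontal disclosure extracts the full surplus. -/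
open Finset

noncomputable section

namespace Screening

variable {m : ℕ} {ι : Type}

/-- `f` is exchangeable: invariant under permutations of the coordinates. -/
def Exchangeable {m : ℕ} (f : (Fin m → ℝ) → ℝ) : Prop :=
  ∀ (π : Equiv.Perm (Fin m)) (v : Fin m → ℝ), (∀ i, 0 ≤ v i) → f (v ∘ π) = f v

/-! Relabelling the products by a permutation `π` preserves an exchangeable distribution and carries
the event `i*(v) = i` to `i*(v) = π i`, so `E[v_{π j} | i*(v) = π i] = E[v_j | i*(v) = i]`. With
`π` the transposition of `i` and `i'`, this gives
`E[v_{i'} | i*(v) = i] ≤ E[v_i | i*(v) = i] = E[v_{i'} | i*(v) = i'] = p_{i'}`. Each signal sells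
the highest-value product at its conditional mean, so the revenue is `E[v_{i*(v)}] = E[max_j v_j]`
by the law of total expectation. -/

section StrictMax

variable {κ κ' α : Type*} [Preorder α]

/-- `i` is the unique maximizing coordinate of `v`; this is the property that `i = i*(v)` has on
the support of a value distribution. -/
def IsStrictMax (v : κ → α) (i : κ) : Prop :=
  ∀ j, j ≠ i → v j < v i

namespace IsStrictMax

variable {v : κ → α} {i j : κ}

lemma le (hi : IsStrictMax v i) (j : κ) : v j ≤ v i := by
  obtain rfl | hj := eq_or_ne j i
  · exact le_rfl
  · exact (hi j hj).le

lemma unique (hi : IsStrictMax v i) (hj : IsStrictMax v j) : i = j := by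
  by_contra hij
  exact lt_asymm (hj i hij) (hi j (Ne.symm hij))

lemma comp_equiv (hi : IsStrictMax v i) (e : κ' ≃ κ) : IsStrictMax (v ∘ e) (e.symm i) := by
  intro j hj
  simpa only [Function.comp_apply, e.apply_symm_apply] using
    hi (e j) fun h => hj (e.eq_symm_apply.mpr h)

end IsStrictMax

variable {V : Finset (κ → α)} {top : (κ → α) → κ}

lemma top_comp_perm (htop : ∀ v ∈ V, IsStrictMax v (top v)) {v : κ → α} {π : Equiv.Perm κ}
    (hv : v ∈ V) (hvπ : v ∘ π ∈ V) : top (v ∘ π) = π.symm (top v) :=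
  (htop _ hvπ).unique ((htop v hv).comp_equiv π)

lemma sum_top_eq_perm [DecidableEq κ] {M : Type*} [AddCommMonoid M]
    (hperm : ∀ v ∈ V, ∀ π : Equiv.Perm κ, v ∘ π ∈ V)
    (htop : ∀ v ∈ V, IsStrictMax v (top v)) (g : (κ → α) → M) (π : Equiv.Perm κ) (i : κ) :
    ∑ v ∈ V with top v = π i, g (v ∘ π) = ∑ v ∈ V with top v = i, g v := by
  refine sum_nbij' (fun v => v ∘ π) (fun v => v ∘ π.symm) ?_ ?_ ?_ ?_ fun _ _ => rfl
  · intro v hv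
    obtain ⟨hvV, hvi⟩ := mem_filter.mp hv
    refine mem_filter.mpr ⟨hperm v hvV π, ?_⟩
    rw [top_comp_perm htop hvV (hperm v hvV π), hvi, π.symm_apply_apply]
  · intro v hv
    obtain ⟨hvV, hvi⟩ := mem_filter.mp hv
    refine mem_filter.mpr ⟨hperm v hvV π.symm, ?_⟩
    rw [top_comp_perm htop hvV (hperm v hvV π.symm), hvi, π.symm_symm]
  · intro v _
    simp only [Function.comp_assoc, Equiv.self_comp_symm, Function.comp_id]
  · intro v _
    simp only [Function.comp_assoc, Equiv.symm_comp_self, Function.comp_id]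

end StrictMax

lemma vmax_eq_of_forall_le (hm : 0 < m) {v : Fin m → ℝ} {i : Fin m} (hi : ∀ j, v j ≤ v i) :
    vmax hm v = v i :=
  le_antisymm (sup'_le _ _ fun j _ => hi j) (le_sup' v (mem_univ i))

section HorizontalDisclosure

variable {V : Finset (Fin m → ℝ)} {f : (Fin m → ℝ) → ℝ} {top : (Fin m → ℝ) → Fin m}

lemma probTop_nonneg (hf : ∀ v ∈ V, 0 ≤ f v) (i : Fin m) : 0 ≤ probTop V f top i :=
  sum_nonneg fun v hv => hf v (mem_of_mem_filter v hv)

lemma condMean_le_condMean_self (hf : ∀ v ∈ V, 0 ≤ f v) (htop : ∀ v ∈ V, ∀ j, v j ≤ v (top v))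
    (i j : Fin m) : condMean V f top i j ≤ condMean V f top i i := by
  refine div_le_div_of_nonneg_right (sum_le_sum fun v hv => ?_) (probTop_nonneg hf i)
  obtain ⟨hvV, rfl⟩ := mem_filter.mp hv
  exact mul_le_mul_of_nonneg_left (htop v hvV j) (hf v hvV)

lemma probTop_mul_condMean (hf : ∀ v ∈ V, 0 ≤ f v) (i j : Fin m) :
    probTop V f top i * condMean V f top i j = ∑ v ∈ V with top v = i, f v * v j := by
  refine mul_div_cancel_of_imp' fun hzero => sum_eq_zero fun v hv => ?_
  have hfv : f v = 0 :=
    (sum_eq_zero_iff_of_nonneg fun w hw => hf w (mem_of_mem_filter w hw)).mp hzero v hv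
  rw [hfv, zero_mul]

lemma sum_probTop_mul_condMean_self (hf : ∀ v ∈ V, 0 ≤ f v) :
    ∑ i, probTop V f top i * condMean V f top i i = ∑ v ∈ V, f v * v (top v) := by
  rw [← sum_fiberwise V top]
  refine sum_congr rfl fun i _ => (probTop_mul_condMean hf i i).trans (sum_congr rfl fun v hv => ?_)
  rw [(mem_filter.mp hv).2]

lemma Exchangeable.comp_perm_mem (hexch : Exchangeable f) (hfzero : ∀ v, v ∉ V → f v = 0)
    {v : Fin m → ℝ} (hv : ∀ i, 0 ≤ v i) (hfv : f v ≠ 0) (π : Equiv.Perm (Fin m)) : v ∘ π ∈ V := by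
  by_contra hvπ
  exact hfv ((hexch π v hv).symm.trans (hfzero _ hvπ))

lemma probTop_perm (hperm : ∀ v ∈ V, ∀ π : Equiv.Perm (Fin m), v ∘ π ∈ V)
    (hinv : ∀ v ∈ V, ∀ π : Equiv.Perm (Fin m), f (v ∘ π) = f v)
    (htop : ∀ v ∈ V, IsStrictMax v (top v)) (π : Equiv.Perm (Fin m)) (i : Fin m) :
    probTop V f top (π i) = probTop V f top i := by
  rw [probTop, probTop, ← sum_top_eq_perm hperm htop f π i]
  exact sum_congr rfl fun v hv => (hinv v (mem_of_mem_filter v hv) π).symm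

lemma condMean_perm (hperm : ∀ v ∈ V, ∀ π : Equiv.Perm (Fin m), v ∘ π ∈ V)
    (hinv : ∀ v ∈ V, ∀ π : Equiv.Perm (Fin m), f (v ∘ π) = f v)
    (htop : ∀ v ∈ V, IsStrictMax v (top v)) (π : Equiv.Perm (Fin m)) (i j : Fin m) :
    condMean V f top (π i) (π j) = condMean V f top i j := by
  rw [condMean, condMean, probTop_perm hperm hinv htop,
    ← sum_top_eq_perm hperm htop (fun v => f v * v j) π i]
  congr 1
  refine sum_congr rfl fun v hv => ?_
  rw [hinv v (mem_of_mem_filter v hv) π, Function.comp_apply]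

lemma condMean_self_eq (hperm : ∀ v ∈ V, ∀ π : Equiv.Perm (Fin m), v ∘ π ∈ V)
    (hinv : ∀ v ∈ V, ∀ π : Equiv.Perm (Fin m), f (v ∘ π) = f v)
    (htop : ∀ v ∈ V, IsStrictMax v (top v)) (i i' : Fin m) :
    condMean V f top i i = condMean V f top i' i' := by
  simpa only [Equiv.swap_apply_left] using
    (condMean_perm hperm hinv htop (Equiv.swap i i') i i).symm

end HorizontalDisclosure

/-- under exchangeability, the pricing mechanism with horizontal
disclosure and prices `p i = E[v_i | i*(v) = i]` is optimally obeyed by the buyer and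
extracts the full surplus `E[max_j v_j]`. -/
theorem exchangeable_full_surplus (m : ℕ) (hm : 0 < m)
    (V : Finset (Fin m → ℝ)) (f : (Fin m → ℝ) → ℝ)
    (hV : V.Nonempty)
    (hfpos : ∀ v ∈ V, 0 < f v)
    (hfzero : ∀ v, v ∉ V → f v = 0)
    (hsum : ∑ v ∈ V, f v = 1)
    (hnn : ∀ v ∈ V, ∀ i, 0 ≤ v i)
    (hexch : Exchangeable f)
    -- every value profile in the support has a unique maximizing coordinate i*(v)
    (istar : (Fin m → ℝ) → Fin m)
    (histar : ∀ v ∈ V, ∀ j, j ≠ istar v → v j < v (istar v))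
    -- the prices p_i = E[v_i | i*(v) = i]
    (p : Fin m → ℝ)
    (hp : ∀ i, 0 < probTop V f istar i → p i = condMean V f istar i i) :
    -- (i) upon signal i the buyer optimally purchases product i, at zero utility
    (∀ i, 0 < probTop V f istar i →
      condMean V f istar i i - p i = 0 ∧
      (∀ i', 0 < probTop V f istar i' → condMean V f istar i i' - p i' ≤ 0)) ∧
    -- (ii) the revenue equals the full surplus E[max_j v_j]
    (∑ i ∈ univ.filter (fun i => 0 < probTop V f istar i), probTop V f istar i * p i =
      ∑ v ∈ V, f v * vmax hm v) := by
  have hf : ∀ v ∈ V, 0 ≤ f v := fun v hv => (hfpos v hv).le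
  have hmax : ∀ v ∈ V, IsStrictMax v (istar v) := histar
  have hperm : ∀ v ∈ V, ∀ π : Equiv.Perm (Fin m), v ∘ π ∈ V := fun v hv =>
    hexch.comp_perm_mem hfzero (hnn v hv) (hfpos v hv).ne'
  have hinv : ∀ v ∈ V, ∀ π : Equiv.Perm (Fin m), f (v ∘ π) = f v := fun v hv π =>
    hexch π v (hnn v hv)
  refine ⟨fun i hi => ⟨sub_eq_zero.mpr (hp i hi).symm, fun i' hi' => sub_nonpos.mpr ?_⟩, ?_⟩
  · calc condMean V f istar i i'
        ≤ condMean V f istar i i := condMean_le_condMean_self hf (fun v hv => (hmax v hv).le) i i'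
      _ = condMean V f istar i' i' := condMean_self_eq hperm hinv hmax i i'
      _ = p i' := (hp i' hi').symm
  · calc ∑ i with 0 < probTop V f istar i, probTop V f istar i * p i
        = ∑ i with 0 < probTop V f istar i, probTop V f istar i * condMean V f istar i i :=
          sum_congr rfl fun i hi => by rw [hp i (mem_filter.mp hi).2]
      _ = ∑ i, probTop V f istar i * condMean V f istar i i :=
          sum_filter_of_ne fun i _ hi => (probTop_nonneg hf i).lt_of_ne' (left_ne_zero_of_mul hi)
      _ = ∑ v ∈ V, f v * v (istar v) := sum_probTop_mul_condMean_self hf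
      _ = ∑ v ∈ V, f v * vmax hm v :=
          sum_congr rfl fun v hv => by rw [vmax_eq_of_forall_le hm (hmax v hv).le]

end Screening
end
end
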